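/- arXiv:2206.12776 — 3 statements merged into one kernel-verified Lean document; each statement's English description precedes it below -/
import Mathlib

section
/- Let φ : C → [0,∞) be a non-degenerate upper semi-continuous function on the Cantor set C. Then the quotient space L₀^φ / (C × {0}) is a smooth fan, and its set of endpoints is exactly the image of G₀^φ under the quotient projection. -/
/-!
Let `M` be a positive upper bound for `φ` (upper semicontinuity on a compact set). The map
`(x, y) ↦ (y / M * x, y / M)` on `L₀^φ` is continuous and identifies exactly the points of
`C × {0}`; since `L₀^φ` is compact (it is the part of the closed hypograph inside `C × [0, M]`), it
induces a closed embedding `fanMap` of the quotient into the plane. Its image is a star-shaped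
compact part of the Cantor fan, and two distinct points with `φ > 0` provide two legs meeting only
in the vertex, so the image is a smooth fan.

For the endpoints: the vertex starts two different legs, and a point strictly inside a leg starts
one sub-arc going down and one going up, so all these have order at least `2` (`exists_arc_leg`). At the tip of a leg,
the slope `q.1 / q.2` is continuous along any arc starting there as long as the height stays
positive, and takes values in the totally disconnected Cantor set, so it is constant. The arc thus
initially runs down the leg and, by the intermediate value theorem, contains a whole piece of it
below the tip (`tip_arc`). Two such arcs share more than the tip, so the order is not `2`.
-/


open Set Topology

noncomputable section

namespace SmoothFanPaper

/-- `A` is an arc (a homeomorphic copy of `[0,1]`) with endpoints `a` and `b`. -/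
def IsArc {α : Type*} [TopologicalSpace α] (A : Set α) (a b : α) : Prop :=
  ∃ h : (Set.Icc (0:ℝ) 1) ≃ₜ A,
    (h ⟨0, Set.left_mem_Icc.mpr zero_le_one⟩ : α) = a ∧
    (h ⟨1, Set.right_mem_Icc.mpr zero_le_one⟩ : α) = b

/-- The order of `x` in `X` is at least `n`: there are `n` arcs contained in `X`, each with
`x` as an endpoint, which pairwise meet only in `x`. -/
def OrderAtLeast {α : Type*} [TopologicalSpace α] (X : Set α) (x : α) (n : ℕ) : Prop :=
  ∃ A : Fin n → Set α, (∀ i, A i ⊆ X) ∧ (∀ i, ∃ b, IsArc (A i) x b) ∧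
    ∀ i j, i ≠ j → A i ∩ A j = {x}

/-- The set of endpoints of `X`: points of order exactly `1`. -/
def Endpoints {α : Type*} [TopologicalSpace α] (X : Set α) : Set α :=
  {x | x ∈ X ∧ OrderAtLeast X x 1 ∧ ¬ OrderAtLeast X x 2}

/-- The Cantor fan: the union of all straight-line segments from the origin to the points of
`cantorSet × {1}` in the plane. -/
def CantorFan : Set (ℝ × ℝ) :=
  {q | ∃ c ∈ cantorSet, ∃ t ∈ Set.Icc (0:ℝ) 1, q = (t * c, t)}

/-- The cone point of the Cantor fan. -/
def fanVertex : ℝ × ℝ := (0, 0)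

/-- A smooth fan: a non-degenerate subcontinuum of the Cantor fan containing the cone point,
whose cone point (the vertex) has order at least 2.  (Every statement below about smooth fans
is invariant under homeomorphisms, so we may realize all smooth fans concretely as such
subcontinua.) -/
structure IsSmoothFan (X : Set (ℝ × ℝ)) : Prop where
  subset_fan : X ⊆ CantorFan
  isCompact : IsCompact X
  isConnected : IsConnected X
  nondegenerate : ∃ x ∈ X, ∃ y ∈ X, x ≠ y
  vertex_mem : fanVertex ∈ X
  vertex_order : OrderAtLeast X fanVertex 2

/-- Two subsets of `(0,1)` are order isomorphic if some order preserving self-homeomorphism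
of `[0,1]` maps one onto the other. -/
def OrderIsomorphic (A B : Set ℝ) : Prop :=
  ∃ h : (Set.Icc (0:ℝ) 1) ≃ₜ (Set.Icc (0:ℝ) 1), StrictMono h ∧
    Subtype.val '' (⇑h '' (Subtype.val ⁻¹' A)) = B

/-- The canonical parametrization of (subsets of) the leg of the Cantor fan through `e`:
a point of the leg is sent to its height, rescaled so that `e` is at height `1`. -/
def legParam (e : ℝ × ℝ) (S : Set (ℝ × ℝ)) : Set ℝ :=
  (fun q : ℝ × ℝ => q.2 / e.2) '' S

/-- The trace of the closure of a set `T` on the open leg `pe ∖ {p, e}` (where `p` is the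
vertex and `pe = segment ℝ p e` is the unique arc in a smooth fan from `p` to an endpoint
`e`), viewed as a subset of `(0,1)` via the canonical parametrization of the leg. -/
def legTrace (T : Set (ℝ × ℝ)) (e : ℝ × ℝ) : Set ℝ :=
  legParam e ((closure T ∩ segment ℝ fanVertex e) \ {fanVertex, e})

/-- `K` enumerates a countably infinite set `𝒦` of compact subsets of `(0,1)`, no two of
which are order isomorphic. -/
def KFamily (K : ℕ → Set ℝ) : Prop :=
  (∀ n, IsCompact (K n) ∧ K n ⊆ Set.Ioo (0:ℝ) 1) ∧
    ∀ m n, m ≠ n → ¬ OrderIsomorphic (K m) (K n)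

/-- `X` is a `𝒦`-fan with witnessing endpoint set `E_𝒦 = {e n : n ∈ ℕ}`. -/
structure IsKFan (K : ℕ → Set ℝ) (X : Set (ℝ × ℝ)) (e : ℕ → ℝ × ℝ) : Prop where
  fan : IsSmoothFan X
  mem_endpoints : ∀ n, e n ∈ Endpoints X
  trace_iso : ∀ n, OrderIsomorphic (legTrace (Endpoints X) (e n)) (K n)
  trace_not_iso : ∀ x ∈ Endpoints X \ Set.range e, ∀ n,
    ¬ OrderIsomorphic (legTrace (Endpoints X) x) (K n)
  meets_closure : ∀ x ∈ Endpoints X \ Set.range e,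
    ((closure (Set.range e) ∩ segment ℝ fanVertex x) \ {fanVertex}).Nonempty

/-- A smooth fan is endpoint rigid if every self-homeomorphism fixes every endpoint. -/
def EndpointRigid (X : Set (ℝ × ℝ)) : Prop :=
  ∀ h : X ≃ₜ X, ∀ x : X, (x : ℝ × ℝ) ∈ Endpoints X → ((h x : X) : ℝ × ℝ) = (x : ℝ × ℝ)

/-- Complete Erdős space `𝔈_c`: the points of the Hilbert space `ℓ²` all of whose
coordinates lie in `{0} ∪ {1/m : m ≥ 1}`. -/
def ErdosSpace : Set (lp (fun _ : ℕ => ℝ) 2) :=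
  {x | ∀ n : ℕ, x n = 0 ∨ ∃ m : ℕ, 0 < m ∧ x n = 1 / m}

/-- `z` is a point of zero-dimensionality of the space it lives in: it has a neighborhood
basis of clopen subsets. -/
def ZeroDimPointAt {α : Type*} [TopologicalSpace α] (z : α) : Prop :=
  ∀ U ∈ nhds z, ∃ V : Set α, IsClopen V ∧ z ∈ V ∧ V ⊆ U
/-- `L₀^φ = {(x,y) : x ∈ C, 0 ≤ y ≤ φ(x)}`, over the Cantor set. -/
def L0 (φ : ℝ → ℝ) : Set (ℝ × ℝ) :=
  {q | q.1 ∈ cantorSet ∧ 0 ≤ q.2 ∧ q.2 ≤ φ q.1}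

/-- `G₀^φ = {(x,φ(x)) : x ∈ C, φ(x) > 0}`, over the Cantor set. -/
def G0 (φ : ℝ → ℝ) : Set (ℝ × ℝ) :=
  {q | q.1 ∈ cantorSet ∧ 0 < q.2 ∧ q.2 = φ q.1}

/-- The setoid on `L₀^φ` identifying the set `C × {0}` to a point. -/
def L0Setoid (φ : ℝ → ℝ) : Setoid (L0 φ) where
  r a b := a = b ∨ ((a : ℝ × ℝ).2 = 0 ∧ (b : ℝ × ℝ).2 = 0)
  iseqv := by
    constructor
    · exact fun _ => Or.inl rfl
    · rintro a b (rfl | ⟨h1, h2⟩)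
      · exact Or.inl rfl
      · exact Or.inr ⟨h2, h1⟩
    · rintro a b c (rfl | ⟨h1, h2⟩) (rfl | ⟨h3, h4⟩)
      · exact Or.inl rfl
      · exact Or.inr ⟨h3, h4⟩
      · exact Or.inr ⟨h1, h2⟩
      · exact Or.inr ⟨h1, h4⟩

/-- The quotient space `L₀^φ / (C × {0})`. -/
def L0Quot (φ : ℝ → ℝ) : Type := Quotient (L0Setoid φ)

instance (φ : ℝ → ℝ) : TopologicalSpace (L0Quot φ) :=
  inferInstanceAs (TopologicalSpace (Quotient (L0Setoid φ)))

/-- The quotient projection `L₀^φ → L₀^φ / (C × {0})`. -/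
def L0Proj (φ : ℝ → ℝ) : L0 φ → L0Quot φ := Quotient.mk (L0Setoid φ)

/-- The setoid on `E × [0,1]` identifying `E × {0}` to a point. -/
def coneSetoid (E : Type*) : Setoid (E × Set.Icc (0:ℝ) 1) where
  r a b := a = b ∨ ((a.2 : ℝ) = 0 ∧ (b.2 : ℝ) = 0)
  iseqv := by
    constructor
    · exact fun _ => Or.inl rfl
    · rintro a b (rfl | ⟨h1, h2⟩)
      · exact Or.inl rfl
      · exact Or.inr ⟨h2, h1⟩
    · rintro a b c (rfl | ⟨h1, h2⟩) (rfl | ⟨h3, h4⟩)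
      · exact Or.inl rfl
      · exact Or.inr ⟨h3, h4⟩
      · exact Or.inr ⟨h1, h2⟩
      · exact Or.inr ⟨h1, h4⟩

/-- The cone over a space `E`: the quotient `(E × [0,1]) / (E × {0})`. -/
def Cone (E : Type*) [TopologicalSpace E] : Type _ := Quotient (coneSetoid E)

instance (E : Type*) [TopologicalSpace E] : TopologicalSpace (Cone E) :=
  inferInstanceAs (TopologicalSpace (Quotient (coneSetoid E)))

/-- A point of the one-point compactification of the disjoint union of the fans `X i`
is to be glued iff it is `∞` or the vertex of one of the fans. -/
def isGluedPoint {ι : Type*} (X : ι → Set (ℝ × ℝ)) :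
    OnePoint (Σ i : ι, X i) → Prop :=
  fun a => a.elim True (fun q => (q.2 : ℝ × ℝ) = fanVertex)

/-- The setoid gluing the vertices (and the point at infinity) of the fans `X i`. -/
def fanSumSetoid {ι : Type*} (X : ι → Set (ℝ × ℝ)) :
    Setoid (OnePoint (Σ i : ι, X i)) where
  r a b := a = b ∨ (isGluedPoint X a ∧ isGluedPoint X b)
  iseqv := by
    constructor
    · exact fun _ => Or.inl rfl
    · rintro a b (rfl | ⟨h1, h2⟩)
      · exact Or.inl rfl
      · exact Or.inr ⟨h2, h1⟩
    · rintro a b c (rfl | ⟨h1, h2⟩) (rfl | ⟨h3, h4⟩)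
      · exact Or.inl rfl
      · exact Or.inr ⟨h3, h4⟩
      · exact Or.inr ⟨h1, h2⟩
      · exact Or.inr ⟨h1, h4⟩

/-- The sum `Σᵢ Xᵢ` of a (finite or countably infinite) family of smooth fans: the quotient of
the one-point compactification of their disjoint union identifying the set consisting of all
the vertices and the point at infinity to a single point.  (For a finite family, `∞` is an
isolated point which is absorbed by the vertex class, so this agrees with the quotient of the
plain disjoint union identifying the vertices.) -/
def FanSum {ι : Type*} (X : ι → Set (ℝ × ℝ)) : Type _ := Quotient (fanSumSetoid X)

instance {ι : Type*} (X : ι → Set (ℝ × ℝ)) : TopologicalSpace (FanSum X) :=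
  inferInstanceAs (TopologicalSpace (Quotient (fanSumSetoid X)))

/-! ### Arcs and orders -/

/-- The range of an injective path in a Hausdorff space is an arc. -/
theorem isArc_range {α : Type*} [TopologicalSpace α] [T2Space α] (f : Set.Icc (0:ℝ) 1 → α)
    (hf : Continuous f) (hi : Function.Injective f) :
    IsArc (range f) (f ⟨0, Set.left_mem_Icc.mpr zero_le_one⟩)
      (f ⟨1, Set.right_mem_Icc.mpr zero_le_one⟩) :=
  ⟨(hf.isClosedEmbedding hi).isEmbedding.toHomeomorph, rfl, rfl⟩

theorem IsArc.image {α β : Type*} [TopologicalSpace α] [TopologicalSpace β] [T2Space β]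
    {A : Set α} {a b : α} (h : IsArc A a b) {f : α → β} (hf : Continuous f)
    (hi : Function.Injective f) : IsArc (f '' A) (f a) (f b) := by
  obtain ⟨e, rfl, rfl⟩ := h
  have := isArc_range (fun t => f (e t)) (by fun_prop)
    (hi.comp (Subtype.val_injective.comp e.injective))
  convert this using 1
  ext y
  constructor
  · rintro ⟨x, hx, rfl⟩
    exact ⟨e.symm ⟨x, hx⟩, by simp⟩
  · rintro ⟨t, rfl⟩
    exact ⟨_, (e t).2, rfl⟩

theorem OrderAtLeast.image {α β : Type*} [TopologicalSpace α] [TopologicalSpace β] [T2Space β]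
    {X : Set α} {x : α} {n : ℕ} (h : OrderAtLeast X x n) {f : α → β} (hf : Continuous f)
    (hi : Function.Injective f) : OrderAtLeast (f '' X) (f x) n := by
  obtain ⟨A, hX, hA, hd⟩ := h
  refine ⟨fun i => f '' A i, fun i => image_mono (hX i), fun i => ?_, fun i j hij => ?_⟩
  · obtain ⟨b, hb⟩ := hA i
    exact ⟨f b, hb.image hf hi⟩
  · rw [← image_inter hi, hd i j hij, image_singleton]

theorem IsArc.left_mem {α : Type*} [TopologicalSpace α] {A : Set α} {a b : α}
    (h : IsArc A a b) : a ∈ A := by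
  obtain ⟨e, rfl, -⟩ := h
  exact (e _).2

theorem orderAtLeast_one {α : Type*} [TopologicalSpace α] {A X : Set α} {x b : α}
    (hA : IsArc A x b) (hX : A ⊆ X) : OrderAtLeast X x 1 :=
  ⟨fun _ => A, fun _ => hX, fun _ => ⟨b, hA⟩, fun i j hij => (hij (Subsingleton.elim i j)).elim⟩

theorem orderAtLeast_two {α : Type*} [TopologicalSpace α] {A B X : Set α} {x b c : α}
    (hA : IsArc A x b) (hB : IsArc B x c) (hAX : A ⊆ X) (hBX : B ⊆ X)
    (h : A ∩ B ⊆ {x}) : OrderAtLeast X x 2 := by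
  have h' : A ∩ B = {x} :=
    h.antisymm (singleton_subset_iff.2 ⟨hA.left_mem, hB.left_mem⟩)
  refine ⟨![A, B], ?_, ?_, ?_⟩
  · simp [Fin.forall_fin_two, hAX, hBX]
  · simp only [Fin.forall_fin_two]
    exact ⟨⟨b, hA⟩, ⟨c, hB⟩⟩
  · simp [Fin.forall_fin_two, h', inter_comm B A]

/-! ### Arcs starting at the tip of a leg -/

theorem cantorSet_isTotallyDisconnected : IsTotallyDisconnected cantorSet := by
  have : TotallyDisconnectedSpace cantorSet :=
    cantorSetHomeomorphNatToBool.symm.totallyDisconnectedSpace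
  exact totallyDisconnectedSpace_subtype_iff.1 this

/-- An arc in the Cantor fan starting at `(h * x, h)` and never rising above height `h` on the leg
of slope `x` contains a piece of that leg just below its starting point. -/
theorem tip_arc {A : Set (ℝ × ℝ)} {x h : ℝ} {b : ℝ × ℝ} (hh : 0 < h) (hA : IsArc A (h * x, h) b)
    (hfan : A ⊆ CantorFan) (htop : ∀ t, (t * x, t) ∈ A → t ≤ h) :
    ∃ s₀ < h, ∀ s ∈ Icc s₀ h, (s * x, s) ∈ A := by
  obtain ⟨e, he0, -⟩ := hA
  set g : ℝ → ℝ × ℝ := fun t => e (projIcc 0 1 zero_le_one t) with hg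
  have hgc : Continuous g :=
    continuous_subtype_val.comp (e.continuous.comp continuous_projIcc)
  have hgA : ∀ t, g t ∈ A := fun t => (e _).2
  have hg0 : g 0 = (h * x, h) := by
    rw [← he0, hg]
    simp only [projIcc_left]
  have hgi : InjOn g (Icc 0 1) := by
    intro s hs t ht hst
    have := e.injective (Subtype.ext hst)
    rw [projIcc_of_mem _ hs, projIcc_of_mem _ ht] at this
    exact congrArg Subtype.val this
  have hev : ∀ᶠ t in 𝓝 (0:ℝ), 0 < (g t).2 :=
    (continuous_snd.comp hgc).continuousAt.eventually_const_lt (by simp [hg0, hh])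
  obtain ⟨ε, hε, hpos⟩ := Metric.eventually_nhds_iff.1 hev
  set δ := min 1 (ε / 2) with hδ
  have hδ0 : 0 < δ := by positivity
  have hδ1 : δ ≤ 1 := min_le_left _ _
  have hδε : δ < ε := (min_le_right _ _).trans_lt (by linarith)
  have hpos' : ∀ t ∈ Icc 0 δ, 0 < (g t).2 := fun t ht => hpos (by
    rw [Real.dist_eq, sub_zero, abs_of_nonneg ht.1]; exact ht.2.trans_lt hδε)
  -- The slope along the arc is continuous with values in the Cantor set, hence constant.
  have hbase : ContinuousOn (fun t => (g t).1 / (g t).2) (Icc 0 δ) :=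
    (continuous_fst.comp hgc).continuousOn.div (continuous_snd.comp hgc).continuousOn
      fun t ht => (hpos' t ht).ne'
  have hmaps : (fun t => (g t).1 / (g t).2) '' Icc 0 δ ⊆ cantorSet := by
    rintro _ ⟨t, ht, rfl⟩
    obtain ⟨c, hc, r, -, hr⟩ := hfan (hgA t)
    have := hpos' t ht
    simp only [hr] at this ⊢
    rwa [mul_div_cancel_left₀ _ this.ne']
  have hsub := cantorSet_isTotallyDisconnected _ hmaps (isPreconnected_Icc.image _ hbase)
  have hleg : ∀ t ∈ Icc 0 δ, g t = ((g t).2 * x, (g t).2) := by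
    intro t ht
    have h1 := hsub (mem_image_of_mem _ ht) (mem_image_of_mem _ (left_mem_Icc.2 hδ0.le))
    simp only [hg0, mul_div_cancel_left₀ _ hh.ne'] at h1
    rw [div_eq_iff (hpos' t ht).ne'] at h1
    ext
    · simp [h1, mul_comm]
    · rfl
  have hδm : δ ∈ Icc 0 δ := right_mem_Icc.2 hδ0.le
  refine ⟨(g δ).2, lt_of_le_of_ne (htop _ (hleg δ hδm ▸ hgA δ)) fun heq => ?_, fun s hs => ?_⟩
  · have : g δ = g 0 := by rw [hleg δ hδm, heq, hg0]
    exact hδ0.ne' (hgi ⟨hδ0.le, hδ1⟩ (left_mem_Icc.2 zero_le_one) this)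
  · have hiv := intermediate_value_Icc' hδ0.le (continuous_snd.comp hgc).continuousOn
    obtain ⟨t, ht, rfl⟩ := hiv (by simpa [hg0] using hs)
    have := hgA t
    rw [hleg t ht] at this
    exact this

theorem tip_not_two {Y : Set (ℝ × ℝ)} {x h : ℝ} (hh : 0 < h) (hfan : Y ⊆ CantorFan)
    (htop : ∀ t, (t * x, t) ∈ Y → t ≤ h) : ¬ OrderAtLeast Y (h * x, h) 2 := by
  rintro ⟨A, hY, hA, hd⟩
  obtain ⟨b, hb⟩ := hA 0
  obtain ⟨c, hc⟩ := hA 1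
  obtain ⟨s, hs, hs'⟩ := tip_arc hh hb ((hY 0).trans hfan) fun t ht => htop t (hY 0 ht)
  obtain ⟨r, hr, hr'⟩ := tip_arc hh hc ((hY 1).trans hfan) fun t ht => htop t (hY 1 ht)
  have hm : max s r < h := max_lt hs hr
  have : (max s r * x, max s r) ∈ A 0 ∩ A 1 :=
    ⟨hs' _ ⟨le_max_left _ _, hm.le⟩, hr' _ ⟨le_max_right _ _, hm.le⟩⟩
  rw [hd 0 1 (by decide), mem_singleton_iff, Prod.mk.injEq] at this
  exact hm.ne this.2

/-! ### The embedding of the quotient into the Cantor fan -/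

/-- The map `L₀^φ / (C × {0}) → ℝ²` induced by `(x, y) ↦ (y / M * x, y / M)`: the leg over `x` goes
to the leg of the Cantor fan through `(x, 1)`, heights being scaled by `1 / M`. -/
def fanMap (φ : ℝ → ℝ) (M : ℝ) : L0Quot φ → ℝ × ℝ :=
  Quotient.lift (fun a : L0 φ => ((a : ℝ × ℝ).2 / M * (a : ℝ × ℝ).1, (a : ℝ × ℝ).2 / M)) (by
    rintro a b (rfl | ⟨h1, h2⟩)
    · rfl
    · simp [h1, h2])

theorem fanMap_proj (φ : ℝ → ℝ) (M : ℝ) (a : L0 φ) :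
    fanMap φ M (L0Proj φ a) = ((a : ℝ × ℝ).2 / M * (a : ℝ × ℝ).1, (a : ℝ × ℝ).2 / M) := rfl

theorem L0Proj_surjective (φ : ℝ → ℝ) : Function.Surjective (L0Proj φ) := Quotient.mk_surjective

theorem L0Proj_continuous (φ : ℝ → ℝ) : Continuous (L0Proj φ) := continuous_quotient_mk'

theorem fanMap_continuous (φ : ℝ → ℝ) (M : ℝ) : Continuous (fanMap φ M) :=
  Continuous.quotient_lift (by fun_prop) _

theorem fanMap_injective (φ : ℝ → ℝ) {M : ℝ} (hM : 0 < M) : Function.Injective (fanMap φ M) := by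
  intro p q hpq
  obtain ⟨⟨⟨x, y⟩, ha⟩, rfl⟩ := L0Proj_surjective φ p
  obtain ⟨⟨⟨x', y'⟩, hb⟩, rfl⟩ := L0Proj_surjective φ q
  simp only [fanMap_proj, Prod.mk.injEq] at hpq
  obtain ⟨h1, h2⟩ := hpq
  have h3 : y = y' := by field_simp at h2; exact h2
  subst h3
  apply Quotient.sound
  by_cases hy : y = 0
  · exact Or.inr ⟨hy, hy⟩
  · left
    have : x = x' := mul_left_cancel₀ (div_ne_zero hy hM.ne') h1
    subst this
    rfl

theorem isCompact_L0 {φ : ℝ → ℝ} {M : ℝ} (husc : UpperSemicontinuousOn φ cantorSet)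
    (hM : ∀ x ∈ cantorSet, φ x ≤ M) : IsCompact (L0 φ) := by
  have h1 := (upperSemicontinuousOn_iff_isClosed_hypograph isClosed_cantorSet).1 husc
  have h2 : L0 φ = (cantorSet ×ˢ Icc 0 M) ∩ {p : ℝ × ℝ | p.1 ∈ cantorSet ∧ p.2 ≤ φ p.1} := by
    ext ⟨x, y⟩
    constructor
    · rintro ⟨hx, hy, hy'⟩
      exact ⟨⟨hx, hy, hy'.trans (hM x hx)⟩, hx, hy'⟩
    · rintro ⟨⟨hx, hy, -⟩, -, hy'⟩
      exact ⟨hx, hy, hy'⟩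
  rw [h2]
  exact (isCompact_cantorSet.prod isCompact_Icc).inter_right h1

/-- Between two different heights `a`, `b` on the leg over `x` there is an arc, made of points of
that leg of height between `a` and `b`. -/
theorem exists_arc_leg {φ : ℝ → ℝ} [T2Space (L0Quot φ)] {M : ℝ} (hM : 0 < M) {x a b : ℝ}
    (ha : (x, a) ∈ L0 φ) (hb : (x, b) ∈ L0 φ) (hab : a ≠ b) :
    ∃ A : Set (L0Quot φ), IsArc A (L0Proj φ ⟨_, ha⟩) (L0Proj φ ⟨_, hb⟩) ∧
      ∀ q ∈ A, ∃ s ∈ uIcc a b, fanMap φ M q = (s / M * x, s / M) := by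
  have hu : ∀ t ∈ Icc (0:ℝ) 1, a + t * (b - a) ∈ uIcc a b := by
    intro t ht
    have := (convex_uIcc a b).add_smul_sub_mem left_mem_uIcc right_mem_uIcc ht
    simpa using this
  have hmem : ∀ t : Icc (0:ℝ) 1, (x, a + (t:ℝ) * (b - a)) ∈ L0 φ := fun t =>
    ⟨ha.1, (le_min ha.2.1 hb.2.1).trans (hu t t.2).1, (hu t t.2).2.trans (max_le ha.2.2 hb.2.2)⟩
  let f : Icc (0:ℝ) 1 → L0Quot φ := fun t => L0Proj φ ⟨_, hmem t⟩
  have hf : Continuous f := (L0Proj_continuous φ).comp (by fun_prop)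
  have hi : Function.Injective f := by
    intro s t hst
    have h1 : (a + (s:ℝ) * (b - a)) / M = (a + (t:ℝ) * (b - a)) / M :=
      congrArg Prod.snd (congrArg (fanMap φ M) hst)
    rw [div_left_inj' hM.ne', add_right_inj] at h1
    exact Subtype.ext (mul_right_cancel₀ (sub_ne_zero.2 hab.symm) h1)
  refine ⟨range f, ?_, ?_⟩
  · convert isArc_range f hf hi using 3 <;> simp
  · rintro _ ⟨t, rfl⟩
    exact ⟨_, hu t t.2, rfl⟩

/-! ### Identification of the quotient and its endpoints -/

/-- For every non-degenerate upper semi-continuous `φ : C → [0,∞)` on the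
Cantor set, the quotient `L₀^φ / (C × {0})` is a smooth fan whose endpoint set is exactly
the image of `G₀^φ` under the quotient projection. -/
theorem L0Quot_isSmoothFan (φ : ℝ → ℝ)
    (h0 : ∀ x ∈ cantorSet, 0 ≤ φ x)
    (husc : UpperSemicontinuousOn φ cantorSet)
    (hnd : ∃ x ∈ cantorSet, ∃ y ∈ cantorSet, x ≠ y ∧ 0 < φ x ∧ 0 < φ y) :
    (∃ Y : Set (ℝ × ℝ), IsSmoothFan Y ∧ Nonempty (L0Quot φ ≃ₜ ↥Y)) ∧
    Endpoints (Set.univ : Set (L0Quot φ)) =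
      L0Proj φ '' {a : L0 φ | (a : ℝ × ℝ) ∈ G0 φ} := by
  obtain ⟨M₀, hM₀⟩ := husc.bddAbove_of_isCompact isCompact_cantorSet
  set M := max M₀ 1 with hMdef
  have hM : 0 < M := zero_lt_one.trans_le (le_max_right _ _)
  have hφM : ∀ x ∈ cantorSet, φ x ≤ M := fun x hx =>
    (hM₀ (mem_image_of_mem _ hx)).trans (le_max_left _ _)
  have : CompactSpace (L0 φ) := isCompact_iff_compactSpace.1 (isCompact_L0 husc hφM)
  have : CompactSpace (L0Quot φ) := inferInstanceAs (CompactSpace (Quotient (L0Setoid φ)))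
  set F := fanMap φ M with hF
  have hFc : Continuous F := fanMap_continuous φ M
  have hFi : Function.Injective F := fanMap_injective φ hM
  have : T2Space (L0Quot φ) := .of_injective_continuous hFi hFc
  have hfan : range F ⊆ CantorFan := by
    rintro _ ⟨q, rfl⟩
    obtain ⟨⟨⟨x, y⟩, hx, hy, hy'⟩, rfl⟩ := L0Proj_surjective φ q
    exact ⟨x, hx, y / M, ⟨div_nonneg hy hM.le, (div_le_one hM).2 (hy'.trans (hφM x hx))⟩, rfl⟩
  have hFv : ∀ x (hx : (x, 0) ∈ L0 φ), F (L0Proj φ ⟨_, hx⟩) = fanVertex := fun x hx => by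
    simp [hF, fanMap_proj, fanVertex]
  have hvert : ∀ q, F q = fanVertex → OrderAtLeast (univ : Set (L0Quot φ)) q 2 := by
    intro q hq
    obtain ⟨x, hx, y, hy, hxy, hφx, hφy⟩ := hnd
    have hx0 : (x, 0) ∈ L0 φ := ⟨hx, le_rfl, hφx.le⟩
    have hy0 : (y, 0) ∈ L0 φ := ⟨hy, le_rfl, hφy.le⟩
    have hx1 : (x, φ x) ∈ L0 φ := ⟨hx, hφx.le, le_rfl⟩
    have hy1 : (y, φ y) ∈ L0 φ := ⟨hy, hφy.le, le_rfl⟩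
    obtain ⟨A, hA, hA'⟩ := exists_arc_leg hM hx0 hx1 hφx.ne
    obtain ⟨B, hB, hB'⟩ := exists_arc_leg hM hy0 hy1 hφy.ne
    rw [hFi ((hFv x hx0).trans hq.symm)] at hA
    rw [hFi ((hFv y hy0).trans hq.symm)] at hB
    refine orderAtLeast_two hA hB (subset_univ _) (subset_univ _) ?_
    rintro p ⟨hpA, hpB⟩
    obtain ⟨s, -, hs⟩ := hA' p hpA
    obtain ⟨t, -, ht⟩ := hB' p hpB
    have h1 := hs.symm.trans ht
    simp only [Prod.mk.injEq] at h1
    rw [← h1.2] at h1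
    -- Distinct slopes can only agree at height zero.
    have hs0 : s / M = 0 := by
      by_contra h
      exact hxy (mul_left_cancel₀ h h1.1)
    apply hFi
    rw [hq, hF, hs, hs0, zero_mul]
    rfl
  obtain ⟨v, hv⟩ : ∃ v, F v = fanVertex := by
    obtain ⟨x, hx, -, -, -, hφx, -⟩ := hnd
    exact ⟨_, hFv x ⟨hx, le_rfl, hφx.le⟩⟩
  refine ⟨⟨range F, ⟨hfan, isCompact_range hFc, ?_, ?_, ⟨v, hv⟩, ?_⟩,
    ⟨(hFc.isClosedEmbedding hFi).isEmbedding.toHomeomorph⟩⟩, ?_⟩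
  · have hstar : StarConvex ℝ 0 (range F) := by
      rw [starConvex_zero_iff]
      rintro _ ⟨q, rfl⟩ t ht0 ht1
      obtain ⟨⟨⟨x, y⟩, hx, hy, hy'⟩, rfl⟩ := L0Proj_surjective φ q
      have hmem : (x, t * y) ∈ L0 φ :=
        ⟨hx, mul_nonneg ht0 hy, (mul_le_of_le_one_left hy ht1).trans hy'⟩
      refine ⟨L0Proj φ ⟨_, hmem⟩, ?_⟩
      simp only [hF, fanMap_proj, Prod.smul_mk, smul_eq_mul, Prod.mk.injEq]
      constructor <;> ring
    exact (hstar.isPathConnected ⟨v, hv⟩).isConnected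
  · obtain ⟨x, hx, -, -, -, hφx, -⟩ := hnd
    refine ⟨_, ⟨v, rfl⟩, _, ⟨L0Proj φ ⟨(x, φ x), hx, hφx.le, le_rfl⟩, rfl⟩, fun h => ?_⟩
    rw [hv] at h
    exact (div_pos hφx hM).ne (congrArg Prod.snd h)
  · have := (hvert v hv).image hFc hFi
    rwa [hv, image_univ] at this
  · ext q
    constructor
    · rintro ⟨-, -, hq⟩
      obtain ⟨⟨⟨x, y⟩, hx, hy, hy'⟩, rfl⟩ := L0Proj_surjective φ q
      dsimp only at hx hy hy'
      have hy0 : 0 < y := by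
        refine hy.lt_of_ne fun h => hq (hvert _ ?_)
        subst h
        exact hFv x ⟨hx, hy, hy'⟩
      refine ⟨_, ⟨hx, hy0, ?_⟩, rfl⟩
      by_contra hne
      -- A point strictly inside its leg is the start of one arc going down and one going up.
      have hlt : y < φ x := hy'.lt_of_ne hne
      have hm : (x, y) ∈ L0 φ := ⟨hx, hy, hy'⟩
      obtain ⟨A, hA, hA'⟩ := exists_arc_leg hM hm
        (show (x, 0) ∈ L0 φ from ⟨hx, le_rfl, h0 x hx⟩) hy0.ne'
      obtain ⟨B, hB, hB'⟩ := exists_arc_leg hM hm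
        (show (x, φ x) ∈ L0 φ from ⟨hx, h0 x hx, le_rfl⟩) hlt.ne
      refine hq (orderAtLeast_two hA hB (subset_univ _) (subset_univ _) ?_)
      rintro p ⟨hpA, hpB⟩
      obtain ⟨s, hs, hsp⟩ := hA' p hpA
      obtain ⟨t, ht, htp⟩ := hB' p hpB
      have h1 : s / M = t / M := congrArg Prod.snd (hsp.symm.trans htp)
      rw [div_left_inj' hM.ne'] at h1
      rw [uIcc_of_ge hy] at hs
      rw [uIcc_of_le hy'] at ht
      have h2 : s = y := le_antisymm hs.2 (h1 ▸ ht.1)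
      apply hFi
      rw [hF, hsp, h2]
      rfl
    · rintro ⟨⟨⟨x, y⟩, hm⟩, ⟨hx, hy, hyx⟩, rfl⟩
      dsimp only at hx hy hyx
      refine ⟨mem_univ _, ?_, fun h => ?_⟩
      · obtain ⟨A, hA, -⟩ := exists_arc_leg hM hm
          (show (x, 0) ∈ L0 φ from ⟨hx, le_rfl, h0 x hx⟩) hy.ne'
        exact orderAtLeast_one hA (subset_univ _)
      · have h2 := h.image hFc hFi
        rw [image_univ] at h2
        refine tip_not_two (div_pos hy hM) hfan ?_ h2
        rintro t ⟨p, hp⟩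
        obtain ⟨⟨⟨x', y'⟩, hx', hy0', hy'⟩, rfl⟩ := L0Proj_surjective φ p
        simp only [hF, fanMap_proj, Prod.mk.injEq] at hp
        obtain ⟨hp1, rfl⟩ := hp
        dsimp only at hx' hy0' hy'
        rcases hy0'.eq_or_lt with h3 | h3
        · rw [← h3, zero_div]
          exact (div_pos hy hM).le
        · have h4 : x' = x := mul_left_cancel₀ (div_pos h3 hM).ne' hp1
          rw [h4, ← hyx] at hy'
          exact (div_le_div_iff_of_pos_right hM).2 hy'

end SmoothFanPaper
end
end

section
/- For every smooth fan X, the set of endpoints E(X) is homeomorphic to a closed subspace of complete Erdős space 𝔈_c. -/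
/-! # Why the endpoint set embeds

A smooth fan `X` meets each leg of the Cantor fan in an initial segment
(`IsSmoothFan.starlike`, from connectedness), so `X` is described by the upper semicontinuous
function `legHeight X` on the Cantor set, and its endpoints are exactly the tops of the legs of
positive height (`IsSmoothFan.mem_endpoints_iff`).

Write `φ` for this height function. The function `1/φ` is lower semicontinuous, hence an increasing
limit of locally constant rational functions. Each increment `m/d` is a sum of `m * d` squares
`(1/d)²`, so `1/φ` is a sum of squares of continuous functions with values in `{0} ∪ {1/m}`.
Adding coordinates that record the binary digits of the slope gives a map `v` from the endpoint set
to `𝔈_c` which is injective, has continuous coordinates, and satisfies `‖v‖² = g + 1/φ` with `g`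
continuous (`exists_coords`).

In `ℓ²`, coordinatewise convergence plus convergence of norms is norm convergence
(`tendsto_lp_of_coord`). As `φ` is the height, which is continuous on the endpoint set, `v` is
continuous. Conversely, if `v` converges along an ultrafilter, then the norms are bounded, so the
endpoints converge in the compact set `X` to a point `q₀` of positive height; the coordinates of
the limit are those attached to the leg of `q₀`, and comparing norms shows that `q₀` is the top of
that leg. Hence `v` is proper, so it is a closed embedding.
-/

open Set Topology

noncomputable section

namespace SmoothFanPaper

open Filter

/-! ### Lower semicontinuous functions as sums of squares -/

/-- The supremum of `φ` over the level-`k` cylinder containing `b`. -/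
def cylSup (φ : (ℕ → Bool) → ℝ) (k : ℕ) (b : ℕ → Bool) : ℝ :=
  sSup (φ '' PiNat.cylinder b k)

/-- A dyadic number slightly above `cylSup φ k b`, inverted: the values `1/φ` are approximated
from below by these locally constant rational functions. -/
def invApprox (φ : (ℕ → Bool) → ℝ) (k : ℕ) (b : ℕ → Bool) : ℚ :=
  2 ^ k / ((⌊2 ^ k * cylSup φ k b⌋₊ : ℚ) + 1)

/-- The successive differences of `invApprox`, starting with `invApprox φ 0` itself. -/
def invStep (φ : (ℕ → Bool) → ℝ) : ℕ → (ℕ → Bool) → ℚ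
  | 0, b => invApprox φ 0 b
  | k + 1, b => invApprox φ (k + 1) b - invApprox φ k b

/-- The nonnegative rational `q = m/d` written as a sum of `m * d` squares `(1/d)²`: this is the
`i`-th number to be squared. -/
def unitPart (q : ℚ) (i : ℕ) : ℝ :=
  if i < q.num.toNat * q.den then 1 / (q.den : ℝ) else 0

theorem hasSum_unitPart_sq {q : ℚ} (hq : 0 ≤ q) :
    HasSum (fun i => unitPart q i ^ 2) (q : ℝ) := by
  have h : HasSum (fun i => unitPart q i ^ 2)
      (∑ i ∈ Finset.range (q.num.toNat * q.den), unitPart q i ^ 2) := by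
    refine hasSum_sum_of_ne_finset_zero fun i hi => ?_
    simp only [Finset.mem_range] at hi
    simp [unitPart, hi]
  convert h using 1
  rw [Finset.sum_congr rfl (g := fun _ => (1 / (q.den : ℝ)) ^ 2)]
  · have hd : (q.den : ℝ) ≠ 0 := by exact_mod_cast q.den_nz
    have hn : ((q.num.toNat : ℕ) : ℝ) = (q.num : ℝ) := by
      have : ((q.num.toNat : ℕ) : ℤ) = q.num := Int.toNat_of_nonneg (Rat.num_nonneg.2 hq)
      exact_mod_cast this
    rw [Finset.sum_const, Finset.card_range, nsmul_eq_mul]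
    push_cast
    rw [hn]
    nth_rewrite 1 [Rat.cast_def q]
    field_simp
  · intro i hi
    simp only [Finset.mem_range] at hi
    simp [unitPart, hi]

theorem unitPart_mem (q : ℚ) (i : ℕ) :
    unitPart q i = 0 ∨ ∃ m : ℕ, 0 < m ∧ unitPart q i = 1 / m := by
  unfold unitPart
  split_ifs
  · exact Or.inr ⟨q.den, q.den_pos, rfl⟩
  · exact Or.inl rfl

section approx

variable {φ : (ℕ → Bool) → ℝ}

theorem bddAbove_cyl (h1 : ∀ b, φ b ≤ 1) (k : ℕ) (b : ℕ → Bool) :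
    BddAbove (φ '' PiNat.cylinder b k) :=
  ⟨1, by rintro _ ⟨c, -, rfl⟩; exact h1 c⟩

theorem le_cylSup (h1 : ∀ b, φ b ≤ 1) (k : ℕ) (b : ℕ → Bool) : φ b ≤ cylSup φ k b :=
  le_csSup (bddAbove_cyl h1 k b) ⟨b, PiNat.self_mem_cylinder b k, rfl⟩

theorem cylSup_nonneg (h0 : ∀ b, 0 ≤ φ b) (h1 : ∀ b, φ b ≤ 1) (k : ℕ) (b : ℕ → Bool) :
    0 ≤ cylSup φ k b :=
  (h0 b).trans (le_cylSup h1 k b)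

theorem cylSup_succ_le (h1 : ∀ b, φ b ≤ 1) (k : ℕ) (b : ℕ → Bool) :
    cylSup φ (k + 1) b ≤ cylSup φ k b :=
  csSup_le_csSup (bddAbove_cyl h1 k b) ⟨_, b, PiNat.self_mem_cylinder b _, rfl⟩
    (image_mono (PiNat.cylinder_anti b k.le_succ))

theorem tendsto_cylSup (h1 : ∀ b, φ b ≤ 1) (hφ : UpperSemicontinuous φ) (b : ℕ → Bool) :
    Tendsto (fun k => cylSup φ k b) atTop (𝓝 (φ b)) := by
  rw [tendsto_order]
  refine ⟨fun a ha => Eventually.of_forall fun k => ha.trans_le (le_cylSup h1 k b), ?_⟩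
  intro a ha
  obtain ⟨a', ha', haa'⟩ := exists_between ha
  have hn : {c | φ c < a'} ∈ 𝓝 b := hφ b a' ha'
  obtain ⟨_, ⟨c, n, rfl⟩, hbc, hsub⟩ :=
    (PiNat.isTopologicalBasis_cylinders (E := fun _ : ℕ => Bool)).mem_nhds_iff.1 hn
  filter_upwards [eventually_ge_atTop n] with k hk
  refine lt_of_le_of_lt (csSup_le ⟨_, b, PiNat.self_mem_cylinder b _, rfl⟩ ?_) haa'
  rintro _ ⟨d, hd, rfl⟩
  refine (hsub ?_ : φ d < a').le
  rw [← PiNat.mem_cylinder_iff_eq.1 hbc]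
  exact PiNat.cylinder_anti b hk hd

theorem tendsto_invApprox (h0 : ∀ b, 0 ≤ φ b) (h1 : ∀ b, φ b ≤ 1) (hφ : UpperSemicontinuous φ)
    {b : ℕ → Bool} (hb : 0 < φ b) :
    Tendsto (fun k => (invApprox φ k b : ℝ)) atTop (𝓝 (1 / φ b)) := by
  have key : Tendsto (fun k : ℕ => ((⌊2 ^ k * cylSup φ k b⌋₊ : ℝ) + 1) / 2 ^ k) atTop
      (𝓝 (φ b)) := by
    have hs := tendsto_cylSup h1 hφ b
    have h2 : Tendsto (fun k : ℕ => cylSup φ k b + (1 / 2 : ℝ) ^ k) atTop (𝓝 (φ b)) := by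
      simpa using hs.add (tendsto_pow_atTop_nhds_zero_of_lt_one (r := (1 / 2 : ℝ))
        (by norm_num) (by norm_num))
    refine tendsto_of_tendsto_of_tendsto_of_le_of_le hs h2 (fun k => ?_) (fun k => ?_)
    · have hp : (0 : ℝ) < 2 ^ k := by positivity
      simp only
      rw [le_div_iff₀ hp, mul_comm]
      exact (Nat.lt_floor_add_one _).le
    · have hp : (0 : ℝ) < 2 ^ k := by positivity
      simp only
      rw [div_le_iff₀ hp, add_mul, one_div, inv_pow, inv_mul_cancel₀ hp.ne', mul_comm]
      gcongr
      rw [mul_comm]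
      exact Nat.floor_le (mul_nonneg hp.le (cylSup_nonneg h0 h1 k b))
  have := key.inv₀ hb.ne'
  rw [one_div]
  refine this.congr fun k => ?_
  simp [invApprox]

theorem invApprox_le_succ (h0 : ∀ b, 0 ≤ φ b) (h1 : ∀ b, φ b ≤ 1) (k : ℕ) (b : ℕ → Bool) :
    invApprox φ k b ≤ invApprox φ (k + 1) b := by
  unfold invApprox
  have hfl : ⌊(2 : ℝ) ^ (k + 1) * cylSup φ (k + 1) b⌋₊ + 1 ≤
      2 * (⌊(2 : ℝ) ^ k * cylSup φ k b⌋₊ + 1) := by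
    rw [Nat.succ_le_iff, Nat.floor_lt (mul_nonneg (by positivity) (cylSup_nonneg h0 h1 _ b))]
    have h3 := Nat.lt_floor_add_one ((2 : ℝ) ^ k * cylSup φ k b)
    have h4 : (2 : ℝ) ^ k * cylSup φ (k + 1) b ≤ (2 : ℝ) ^ k * cylSup φ k b :=
      mul_le_mul_of_nonneg_left (cylSup_succ_le h1 k b) (by positivity)
    push_cast
    rw [pow_succ]
    linarith
  have hfl' : ((⌊(2 : ℝ) ^ (k + 1) * cylSup φ (k + 1) b⌋₊ : ℚ) + 1) ≤
      2 * ((⌊(2 : ℝ) ^ k * cylSup φ k b⌋₊ : ℚ) + 1) := by exact_mod_cast hfl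
  rw [div_le_div_iff₀ (by positivity) (by positivity), pow_succ (2 : ℚ) k]
  nlinarith [mul_le_mul_of_nonneg_left hfl' (by positivity : (0 : ℚ) ≤ 2 ^ k)]

theorem invStep_nonneg (h0 : ∀ b, 0 ≤ φ b) (h1 : ∀ b, φ b ≤ 1) (k : ℕ) (b : ℕ → Bool) :
    0 ≤ invStep φ k b := by
  cases k with
  | zero => simp only [invStep, invApprox]; positivity
  | succ k => exact sub_nonneg.2 (invApprox_le_succ h0 h1 k b)

theorem hasSum_invStep (h0 : ∀ b, 0 ≤ φ b) (h1 : ∀ b, φ b ≤ 1) (hφ : UpperSemicontinuous φ)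
    {b : ℕ → Bool} (hb : 0 < φ b) :
    HasSum (fun k => (invStep φ k b : ℝ)) (1 / φ b) := by
  rw [hasSum_iff_tendsto_nat_of_nonneg (fun k => by exact_mod_cast invStep_nonneg h0 h1 k b),
    ← tendsto_add_atTop_iff_nat 1]
  refine (tendsto_invApprox h0 h1 hφ hb).congr fun k => ?_
  induction k with
  | zero => simp [invStep]
  | succ k ih => rw [Finset.sum_range_succ, ← ih]; simp [invStep]

theorem invStep_congr {k : ℕ} {b c : ℕ → Bool} (h : c ∈ PiNat.cylinder b k) :
    invStep φ k c = invStep φ k b := by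
  have key : ∀ j ≤ k, invApprox φ j c = invApprox φ j b := by
    intro j hj
    simp only [invApprox, cylSup,
      PiNat.mem_cylinder_iff_eq.1 (PiNat.cylinder_anti b hj h)]
  cases k with
  | zero => exact key 0 le_rfl
  | succ k => simp only [invStep, key (k + 1) le_rfl, key k k.le_succ]

end approx

/-- The coordinates of the embedding of the Cantor space, indexed by pairs: row `0` records the
binary digits of `b`, and the squares in row `k + 1` add up to the `k`-th increment of the
approximation of `1/φ`. -/
def pairCoord (φ : (ℕ → Bool) → ℝ) : ℕ × ℕ → (ℕ → Bool) → ℝ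
  | (0, i), b => if b i then 1 / ((2 ^ i : ℕ) : ℝ) else 0
  | (k + 1, i), b => unitPart (invStep φ k b) i

/-- The continuous summand of the squared norm that comes from the binary digits. -/
def digitSum (b : ℕ → Bool) : ℝ := ∑' i, (if b i then 1 / ((2 ^ i : ℕ) : ℝ) else 0) ^ 2

theorem digit_bound (b : ℕ → Bool) (i : ℕ) :
    ‖(if b i then 1 / ((2 ^ i : ℕ) : ℝ) else 0) ^ 2‖ ≤ (1 / 4 : ℝ) ^ i := by
  split_ifs
  · rw [Real.norm_of_nonneg (by positivity)]
    push_cast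
    rw [div_pow, one_pow, ← pow_mul, mul_comm i 2, pow_mul]
    norm_num [div_pow]
  · simp

theorem summable_quarter : Summable fun i : ℕ => (1 / 4 : ℝ) ^ i :=
  summable_geometric_of_lt_one (by norm_num) (by norm_num)

theorem continuous_pairCoord (φ : (ℕ → Bool) → ℝ) (p : ℕ × ℕ) : Continuous (pairCoord φ p) := by
  obtain ⟨k, i⟩ := p
  cases k with
  | zero =>
    exact (continuous_of_discreteTopology
      (f := fun t : Bool => if t then 1 / ((2 ^ i : ℕ) : ℝ) else 0)).comp (continuous_apply i)
  | succ k =>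
    refine continuous_iff_continuousAt.2 fun b => ?_
    refine (continuousAt_const (y := unitPart (invStep φ k b) i)).congr ?_
    filter_upwards [(PiNat.isOpen_cylinder (fun _ : ℕ => Bool) b k).mem_nhds
      (PiNat.self_mem_cylinder b k)] with c hc
    simp only [pairCoord, invStep_congr hc]

theorem continuous_digitSum : Continuous digitSum := by
  refine continuous_tsum (fun i => ?_) summable_quarter (fun i b => digit_bound b i)
  exact (continuous_pairCoord (fun _ => 0) (0, i)).pow 2

theorem hasSum_pairCoord_sq {φ : (ℕ → Bool) → ℝ} (h0 : ∀ b, 0 ≤ φ b) (h1 : ∀ b, φ b ≤ 1)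
    (hφ : UpperSemicontinuous φ) {b : ℕ → Bool} (hb : 0 < φ b) :
    HasSum (fun p => pairCoord φ p b ^ 2) (digitSum b + 1 / φ b) := by
  have hrow : ∀ k, HasSum (fun i => pairCoord φ (k, i) b ^ 2)
      (match k with | 0 => digitSum b | k + 1 => (invStep φ k b : ℝ)) := by
    intro k
    cases k with
    | zero => exact (Summable.of_norm_bounded summable_quarter (digit_bound b)).hasSum
    | succ k => exact hasSum_unitPart_sq (invStep_nonneg h0 h1 k b)
  have hcol : HasSum (fun k : ℕ =>
      (match k with | 0 => digitSum b | k + 1 => (invStep φ k b : ℝ))) (digitSum b + 1 / φ b) := by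
    rw [add_comm]
    refine (hasSum_nat_add_iff' 1).1 ?_
    simpa using hasSum_invStep h0 h1 hφ hb
  have hsum : Summable (fun p => pairCoord φ p b ^ 2) := by
    refine (summable_prod_of_nonneg (fun p => sq_nonneg _)).2 ⟨fun k => (hrow k).summable, ?_⟩
    exact hcol.summable.congr fun k => (hrow k).tsum_eq.symm
  have := hsum.hasSum.prod_fiberwise hrow
  rw [hcol.unique this]
  exact hsum.hasSum

theorem pairCoord_mem (φ : (ℕ → Bool) → ℝ) (p : ℕ × ℕ) (b : ℕ → Bool) :
    pairCoord φ p b = 0 ∨ ∃ m : ℕ, 0 < m ∧ pairCoord φ p b = 1 / m := by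
  obtain ⟨k, i⟩ := p
  cases k with
  | zero =>
    simp only [pairCoord]
    split_ifs
    · exact Or.inr ⟨2 ^ i, by positivity, rfl⟩
    · exact Or.inl rfl
  | succ k => exact unitPart_mem _ _

theorem pairCoord_injective {φ : (ℕ → Bool) → ℝ} {b c : ℕ → Bool}
    (h : ∀ p, pairCoord φ p b = pairCoord φ p c) : b = c := by
  funext i
  have hi := h (0, i)
  simp only [pairCoord] at hi
  have hp : (0 : ℝ) < 1 / ((2 ^ i : ℕ) : ℝ) := by positivity
  cases hb : b i <;> cases hc : c i <;> simp only [hb, hc, if_true, Bool.false_eq_true, if_false] at hi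
  · rfl
  · exact absurd hi hp.ne
  · exact absurd hi hp.ne'
  · rfl

/-- Every upper semicontinuous `0 ≤ φ ≤ 1` on the Cantor space is encoded by continuous
coordinate functions with values in `{0} ∪ {1/m}`: they separate points, and their squares add up to `1/φ`
plus a continuous function wherever `φ > 0`. -/
theorem exists_coords {φ : (ℕ → Bool) → ℝ} (h0 : ∀ b, 0 ≤ φ b) (h1 : ∀ b, φ b ≤ 1)
    (hφ : UpperSemicontinuous φ) :
    ∃ (x : ℕ → (ℕ → Bool) → ℝ) (g : (ℕ → Bool) → ℝ), Continuous g ∧ (∀ b, 0 ≤ g b) ∧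
      (∀ n, Continuous (x n)) ∧
      (∀ n b, x n b = 0 ∨ ∃ m : ℕ, 0 < m ∧ x n b = 1 / m) ∧
      (∀ b c, (∀ n, x n b = x n c) → b = c) ∧
      ∀ b, 0 < φ b → HasSum (fun n => x n b ^ 2) (g b + 1 / φ b) := by
  refine ⟨fun n => pairCoord φ (Nat.pairEquiv.symm n), digitSum, continuous_digitSum,
    fun b => tsum_nonneg fun i => sq_nonneg _, fun n => continuous_pairCoord φ _,
    fun n b => pairCoord_mem φ _ b, fun b c h => pairCoord_injective (φ := φ) fun p => ?_,
    fun b hb => ?_⟩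
  · have := h (Nat.pairEquiv p)
    simpa only [Equiv.symm_apply_apply] using this
  · exact (Equiv.hasSum_iff (f := fun p => pairCoord φ p b ^ 2) Nat.pairEquiv.symm).2
      (hasSum_pairCoord_sq h0 h1 hφ hb)

/-! ### Convergence in `ℓ²` -/

/-- In `ℓ²`, coordinatewise convergence together with convergence of the squared norms implies
norm convergence: the approximants stay close to a finitely supported truncation of the limit. -/
theorem tendsto_lp_of_coord {ι : Type*} {l : Filter ι} {u : ι → lp (fun _ : ℕ => ℝ) 2}
    {x : lp (fun _ : ℕ => ℝ) 2} (hc : ∀ n, Tendsto (fun a => u a n) l (𝓝 (x n)))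
    (hn : Tendsto (fun a => ‖u a‖ ^ 2) l (𝓝 (‖x‖ ^ 2))) : Tendsto u l (𝓝 x) := by
  rw [Metric.tendsto_nhds]
  intro ε hε
  obtain ⟨s, hs⟩ : ∃ s : Finset ℕ, ‖x - ∑ i ∈ s, lp.single 2 i (x i)‖ < ε / 2 := by
    have h := lp.hasSum_single (p := 2) (by simp) x
    have h2 := (Metric.tendsto_nhds.1 h (ε / 2) (by positivity)).exists
    obtain ⟨s, hs⟩ := h2
    exact ⟨s, by rwa [dist_comm, dist_eq_norm] at hs⟩
  set y := ∑ i ∈ s, lp.single 2 i (x i) with hy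
  have hin : Tendsto (fun a => inner ℝ (u a) y) l (𝓝 (inner ℝ x y)) := by
    have e : ∀ v : lp (fun _ : ℕ => ℝ) 2, inner ℝ v y = ∑ i ∈ s, v i * x i := by
      intro v
      rw [hy, inner_sum]
      refine Finset.sum_congr rfl fun i _ => ?_
      rw [lp.inner_single_right]
      simp [mul_comm]
    simp only [e]
    exact tendsto_finsetSum _ fun i _ => (hc i).mul_const _
  have hd : Tendsto (fun a => ‖u a - y‖ ^ 2) l (𝓝 (‖x - y‖ ^ 2)) := by
    simp only [norm_sub_sq_real]
    exact (hn.sub (hin.const_mul 2)).add_const _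
  have hlt : ‖x - y‖ ^ 2 < (ε / 2) ^ 2 := by gcongr
  filter_upwards [hd.eventually_lt_const hlt] with a ha
  have ha' : ‖u a - y‖ < ε / 2 := lt_of_pow_lt_pow_left₀ 2 (by positivity) ha
  calc dist (u a) x = ‖(u a - y) - (x - y)‖ := by rw [dist_eq_norm]; congr 1; abel
    _ ≤ ‖u a - y‖ + ‖x - y‖ := norm_sub_le _ _
    _ < ε := by linarith

theorem norm_sq_eq_of_hasSum {v : lp (fun _ : ℕ => ℝ) 2} {a : ℝ}
    (h : HasSum (fun n => v n ^ 2) a) : ‖v‖ ^ 2 = a := by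
  rw [← real_inner_self_eq_norm_sq, lp.inner_eq_tsum, ← h.tsum_eq]
  simp [sq]

theorem memℓp_of_summable_sq {f : ℕ → ℝ} (h : Summable fun n => f n ^ 2) :
    Memℓp (E := fun _ : ℕ => ℝ) f 2 := by
  refine memℓp_gen ?_
  simpa using h

theorem continuous_lp_apply (n : ℕ) : Continuous fun v : lp (fun _ : ℕ => ℝ) 2 => v n := by
  have : (fun v : lp (fun _ : ℕ => ℝ) 2 => v n) =
      fun v => inner ℝ v (lp.single 2 n (1 : ℝ)) := by
    funext v
    rw [lp.inner_single_right]
    simp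
  rw [this]
  fun_prop

/-! ### Legs, arcs and endpoints of a smooth fan -/

/-- The point at height `t` on the leg of slope `c`. -/
def legPt (c t : ℝ) : ℝ × ℝ := (t * c, t)

theorem continuous_legPt : Continuous fun p : ℝ × ℝ => legPt p.1 p.2 := by
  unfold legPt; fun_prop

theorem eq_legPt {q : ℝ × ℝ} (h : 0 < q.2) : q = legPt (q.1 / q.2) q.2 :=
  Prod.ext (by simp only [legPt]; field_simp) rfl

instance : TotallyDisconnectedSpace cantorSet :=
  cantorSetHomeomorphNatToBool.symm.totallyDisconnectedSpace

section fan

variable {X : Set (ℝ × ℝ)}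

theorem IsSmoothFan.height_mem (hX : IsSmoothFan X) {q : ℝ × ℝ} (hq : q ∈ X) :
    q.2 ∈ Icc (0 : ℝ) 1 := by
  obtain ⟨c, -, t, ht, rfl⟩ := hX.subset_fan hq
  exact ht

theorem IsSmoothFan.slope_mem (hX : IsSmoothFan X) {q : ℝ × ℝ} (hq : q ∈ X) (h : 0 < q.2) :
    q.1 / q.2 ∈ cantorSet := by
  obtain ⟨c, hc, t, ht, rfl⟩ := hX.subset_fan hq
  simp only at h ⊢
  rwa [mul_div_cancel_left₀ _ h.ne']

theorem IsSmoothFan.isCompact_heights (hX : IsSmoothFan X) (c : ℝ) :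
    IsCompact {t | legPt c t ∈ X} := by
  refine isCompact_Icc.of_isClosed_subset ?_ fun t ht => hX.height_mem ht
  exact hX.isCompact.isClosed.preimage
    (continuous_legPt.comp (by fun_prop : Continuous fun t => (c, t)))

theorem IsSmoothFan.zero_mem_heights (hX : IsSmoothFan X) (c : ℝ) : legPt c 0 ∈ X := by
  have := hX.vertex_mem
  simpa [legPt, fanVertex] using this

/-- The part of a smooth fan on a leg is an initial segment: a gap at height `s` would, together
with a clopen neighbourhood of slopes missing `X` at height `s`, disconnect `X`. -/
theorem IsSmoothFan.starlike (hX : IsSmoothFan X) {c s t : ℝ} (h : legPt c t ∈ X)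
    (h0 : 0 ≤ s) (hst : s ≤ t) : legPt c s ∈ X := by
  by_contra hs
  have hs0 : 0 < s := h0.lt_of_ne fun e => hs (e ▸ hX.zero_mem_heights c)
  have hst' : s < t := hst.lt_of_ne fun e => hs (e ▸ h)
  have hc : c ∈ cantorSet := by
    have := hX.slope_mem h (hs0.trans hst')
    simpa only [legPt, mul_div_cancel_left₀ _ (hs0.trans hst').ne'] using this
  have : CompactSpace cantorSet := isCompact_iff_compactSpace.1 isCompact_cantorSet
  have hW : IsOpen {d : cantorSet | legPt d s ∉ X} :=
    hX.isCompact.isClosed.isOpen_compl.preimage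
      (continuous_legPt.comp (by fun_prop : Continuous fun d : cantorSet => ((d : ℝ), s)))
  obtain ⟨D, hD, hcD, hDW⟩ := compact_exists_isClopen_in_isOpen hW (x := ⟨c, hc⟩) hs
  obtain ⟨O₁, hO₁, hD₁⟩ := isOpen_induced_iff.1 hD.isOpen
  obtain ⟨O₂, hO₂, hD₂⟩ := isOpen_induced_iff.1 hD.compl.isOpen
  have hslope : ContinuousOn (fun q : ℝ × ℝ => q.1 / q.2) {q | 0 < q.2} :=
    continuousOn_fst.div continuousOn_snd fun q hq => (ne_of_gt hq)
  have hpos : IsOpen {q : ℝ × ℝ | 0 < q.2} := isOpen_lt continuous_const continuous_snd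
  have hA : IsOpen ({q : ℝ × ℝ | s < q.2} ∩ ({q | 0 < q.2} ∩ (fun q => q.1 / q.2) ⁻¹' O₁)) :=
    (isOpen_lt continuous_const continuous_snd).inter (hslope.isOpen_inter_preimage hpos hO₁)
  have hB : IsOpen ({q : ℝ × ℝ | q.2 < s} ∪ ({q | 0 < q.2} ∩ (fun q => q.1 / q.2) ⁻¹' O₂)) :=
    (isOpen_lt continuous_snd continuous_const).union (hslope.isOpen_inter_preimage hpos hO₂)
  have hdis : ∀ d : cantorSet, (d : ℝ) ∈ O₁ ↔ d ∈ D := fun d => by rw [← hD₁]; rfl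
  have hdis₂ : ∀ d : cantorSet, (d : ℝ) ∈ O₂ ↔ d ∉ D := fun d => by
    rw [← mem_compl_iff, ← hD₂]; rfl
  refine absurd (hX.isConnected.isPreconnected _ _ hA hB ?_ ?_ ?_) ?_
  · intro q hq
    rcases lt_trichotomy q.2 s with hlt | heq | hgt
    · exact Or.inr (Or.inl hlt)
    · have hq0 : 0 < q.2 := heq ▸ hs0
      refine Or.inr (Or.inr ⟨hq0, (hdis₂ ⟨_, hX.slope_mem hq hq0⟩).2 fun hmem => ?_⟩)
      refine hDW hmem ?_
      simp only
      rw [← heq, ← eq_legPt hq0]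
      exact hq
    · have hq0 : 0 < q.2 := hs0.trans hgt
      by_cases hmem : (⟨_, hX.slope_mem hq hq0⟩ : cantorSet) ∈ D
      · exact Or.inl ⟨hgt, hq0, (hdis ⟨_, hX.slope_mem hq hq0⟩).2 hmem⟩
      · exact Or.inr (Or.inr ⟨hq0, (hdis₂ ⟨_, hX.slope_mem hq hq0⟩).2 hmem⟩)
  · refine ⟨legPt c t, h, hst', hs0.trans hst', ?_⟩
    have : (legPt c t).1 / (legPt c t).2 = c := by
      simp only [legPt, mul_div_cancel_left₀ _ (hs0.trans hst').ne']
    simp only [mem_preimage, this]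
    exact (hdis ⟨c, hc⟩).2 hcD
  · exact ⟨legPt c 0, hX.zero_mem_heights c, Or.inl hs0⟩
  · rintro ⟨q, hq, ⟨hqs, hq0, hq1⟩, hq2⟩
    rcases hq2 with hq2 | ⟨-, hq2⟩
    · exact lt_asymm (a := s) (b := q.2) hqs hq2
    · exact (hdis₂ ⟨_, hX.slope_mem hq hq0⟩).1 hq2 ((hdis ⟨_, hX.slope_mem hq hq0⟩).1 hq1)

/-- The height of the leg of slope `c` in `X`. -/
def legHeight (X : Set (ℝ × ℝ)) (c : ℝ) : ℝ := sSup {t | legPt c t ∈ X}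

theorem IsSmoothFan.isGreatest (hX : IsSmoothFan X) (c : ℝ) :
    IsGreatest {t | legPt c t ∈ X} (legHeight X c) :=
  (hX.isCompact_heights c).isGreatest_sSup ⟨0, hX.zero_mem_heights c⟩

theorem IsSmoothFan.upperSemicontinuous_legHeight (hX : IsSmoothFan X) :
    UpperSemicontinuous (legHeight X) := by
  intro c y hy
  have hcl : IsClosed {p : ℝ × Icc (0 : ℝ) 1 | y ≤ p.2 ∧ legPt p.1 p.2 ∈ X} :=
    (isClosed_le (f := fun _ => y) (g := fun p : ℝ × Icc (0 : ℝ) 1 => (p.2 : ℝ))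
      continuous_const (by fun_prop)).inter
      (hX.isCompact.isClosed.preimage (continuous_legPt.comp
        (by fun_prop : Continuous fun p : ℝ × Icc (0 : ℝ) 1 => (p.1, (p.2 : ℝ)))))
  have hop := (isClosedMap_fst_of_compactSpace _ hcl).isOpen_compl
  refine mem_of_superset (hop.mem_nhds ?_) ?_
  · rintro ⟨⟨_, t⟩, ⟨hyt, ht⟩, rfl⟩
    exact (hyt.trans ((hX.isGreatest _).2 ht)).not_gt hy
  · intro d hd
    by_contra hlt
    have hm := (hX.isGreatest d).1
    exact hd ⟨(d, ⟨legHeight X d, hX.height_mem hm⟩), ⟨not_lt.1 hlt, hm⟩, rfl⟩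

/-- The straight arc between two points of a leg. -/
def legArc (c t t' : ℝ) : Set (ℝ × ℝ) :=
  range fun u : Icc (0 : ℝ) 1 => legPt c (t + u * (t' - t))

theorem isArc_legArc (c : ℝ) {t t' : ℝ} (h : t ≠ t') :
    IsArc (legArc c t t') (legPt c t) (legPt c t') := by
  have hcont : Continuous fun u : Icc (0 : ℝ) 1 => legPt c (t + u * (t' - t)) := by
    unfold legPt; fun_prop
  have hinj : Function.Injective fun u : Icc (0 : ℝ) 1 => legPt c (t + u * (t' - t)) := by
    intro u v huv
    have := congrArg Prod.snd huv
    simp only [legPt, add_right_inj] at this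
    exact Subtype.ext (mul_right_cancel₀ (sub_ne_zero.2 h.symm) this)
  refine ⟨(hcont.isClosedEmbedding hinj).isEmbedding.toHomeomorph, ?_, ?_⟩
  · show legPt c (t + 0 * (t' - t)) = _
    simp
  · show legPt c (t + 1 * (t' - t)) = _
    simp

/-- An arc in `X` that starts at the top of a leg runs down that leg for a while: near the top
the slope along the arc is a continuous function with values in the totally disconnected Cantor
set, hence constant. -/
theorem IsSmoothFan.arc_contains (hX : IsSmoothFan X) {c t : ℝ} (ht : 0 < t)
    (hmax : ∀ s, legPt c s ∈ X → s ≤ t) {A : Set (ℝ × ℝ)} {b : ℝ × ℝ} (hAX : A ⊆ X)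
    (hA : IsArc A (legPt c t) b) : ∃ s₀ < t, ∀ s ∈ Icc s₀ t, legPt c s ∈ A := by
  obtain ⟨h, hh0, -⟩ := hA
  set γ : ℝ → ℝ × ℝ := fun u => (h (projIcc 0 1 zero_le_one u) : ℝ × ℝ) with hγ
  have hγc : Continuous γ := continuous_subtype_val.comp (h.continuous.comp continuous_projIcc)
  have hγA : ∀ u, γ u ∈ A := fun u => Subtype.coe_prop _
  have hγ0 : γ 0 = legPt c t := by
    rw [← hh0]; simp only [hγ, projIcc_left]
  have hpos : ∀ᶠ u in 𝓝 (0 : ℝ), 0 < (γ u).2 := by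
    refine (continuous_snd.comp hγc).continuousAt.eventually (lt_mem_nhds ?_)
    simp only [Function.comp, hγ0]
    exact ht
  obtain ⟨ε, hε, hball⟩ := Metric.eventually_nhds_iff.1 hpos
  set u₀ : ℝ := min (ε / 2) 1 with hu₀
  have hu0 : 0 < u₀ := lt_min (by positivity) one_pos
  have hu1 : u₀ ≤ 1 := min_le_right _ _
  have hpos' : ∀ u ∈ Icc 0 u₀, 0 < (γ u).2 := by
    intro u hu
    refine hball ?_
    rw [Real.dist_eq, sub_zero, abs_of_nonneg hu.1]
    have := hu.2.trans (min_le_left _ _)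
    linarith
  have hσ : ContinuousOn (fun u => (γ u).1 / (γ u).2) (Icc 0 u₀) :=
    (continuous_fst.comp hγc).continuousOn.div (continuous_snd.comp hγc).continuousOn
      fun u hu => (hpos' u hu).ne'
  have htd : IsTotallyDisconnected cantorSet :=
    totallyDisconnectedSpace_subtype_iff.1 inferInstance
  have hsub := htd _ (by
    rintro _ ⟨u, hu, rfl⟩
    exact hX.slope_mem (hAX (hγA u)) (hpos' u hu)) (isPreconnected_Icc.image _ hσ)
  have hleg : ∀ u ∈ Icc 0 u₀, γ u = legPt c (γ u).2 := by
    intro u hu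
    have h1 := hsub (mem_image_of_mem _ hu) (mem_image_of_mem _ (left_mem_Icc.2 hu0.le))
    have h2 : (γ 0).1 / (γ 0).2 = c := by
      rw [hγ0]; simp only [legPt, mul_div_cancel_left₀ _ ht.ne']
    simp only [h2] at h1
    have h3 := eq_legPt (hpos' u hu)
    rwa [h1] at h3
  have hne : (γ u₀).2 ≠ t := by
    intro e
    have h1 := hleg u₀ (right_mem_Icc.2 hu0.le)
    rw [e, ← hγ0] at h1
    have h2 := h.injective (Subtype.ext h1)
    rw [projIcc_of_mem zero_le_one ⟨hu0.le, hu1⟩, projIcc_left] at h2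
    exact hu0.ne' (congrArg Subtype.val h2)
  have hle : (γ u₀).2 ≤ t := by
    refine hmax _ ?_
    rw [← hleg u₀ (right_mem_Icc.2 hu0.le)]
    exact hAX (hγA u₀)
  refine ⟨(γ u₀).2, hle.lt_of_ne hne, fun s hs => ?_⟩
  have hivt := intermediate_value_Icc' hu0.le (continuous_snd.comp hγc).continuousOn
  have hs' : s ∈ Icc ((Prod.snd ∘ γ) u₀) ((Prod.snd ∘ γ) 0) := by
    simp only [Function.comp, hγ0]
    exact hs
  obtain ⟨u, hu, rfl⟩ := hivt hs'
  simp only [Function.comp]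
  rw [← hleg u hu]
  exact hγA u

theorem legArc_subset (hX : IsSmoothFan X) {c t t' m : ℝ} (ht : 0 ≤ t) (ht' : 0 ≤ t')
    (htm : t ≤ m) (htm' : t' ≤ m) (hm : legPt c m ∈ X) : legArc c t t' ⊆ X := by
  rintro _ ⟨⟨u, hu0, hu1⟩, rfl⟩
  refine hX.starlike hm ?_ ?_
  · simp only
    nlinarith [mul_nonneg hu0 ht', mul_nonneg (sub_nonneg.2 hu1) ht]
  · simp only
    nlinarith [mul_nonneg hu0 (sub_nonneg.2 htm'),
      mul_nonneg (sub_nonneg.2 hu1) (sub_nonneg.2 htm)]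

/-- The endpoints of a smooth fan are exactly the tops of its nondegenerate legs. -/
theorem IsSmoothFan.mem_endpoints_iff (hX : IsSmoothFan X) {q : ℝ × ℝ} :
    q ∈ Endpoints X ↔ q ∈ X ∧ 0 < q.2 ∧ legHeight X (q.1 / q.2) = q.2 := by
  constructor
  · rintro ⟨hq, -, h2⟩
    have hpos : 0 < q.2 := by
      refine (hX.height_mem hq).1.lt_of_ne fun e => h2 ?_
      obtain ⟨c, -, t, -, rfl⟩ := hX.subset_fan hq
      simp only at e
      subst e
      have := hX.vertex_order
      simpa [fanVertex] using this
    refine ⟨hq, hpos, ?_⟩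
    set c := q.1 / q.2
    have hqc : q = legPt c q.2 := eq_legPt hpos
    set t := q.2
    have hq' : legPt c t ∈ X := hqc ▸ hq
    by_contra hne
    set m := legHeight X c
    have hm : legPt c m ∈ X := (hX.isGreatest c).1
    have hlt : t < m := ((hX.isGreatest c).2 hq').lt_of_ne (Ne.symm hne)
    refine h2 ⟨![legArc c t 0, legArc c t m], ?_, ?_, ?_⟩
    · intro i
      fin_cases i
      · exact legArc_subset hX hpos.le le_rfl le_rfl hpos.le hq'
      · exact legArc_subset hX hpos.le (hpos.trans hlt).le hlt.le le_rfl hm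
    · intro i
      rw [hqc]
      fin_cases i
      · exact ⟨_, isArc_legArc c hpos.ne'⟩
      · exact ⟨_, isArc_legArc c hlt.ne⟩
    · have key : legArc c t 0 ∩ legArc c t m = {q} := by
        rw [hqc]
        apply Subset.antisymm
        · rintro _ ⟨⟨⟨u, hu0, hu1⟩, rfl⟩, ⟨v, hv0, hv1⟩, hv⟩
          have e := congrArg Prod.snd hv
          simp only [legPt] at e
          have hz : u * (0 - t) = 0 := by
            nlinarith [mul_nonneg hu0 hpos.le, mul_nonneg hv0 (sub_nonneg.2 hlt.le)]
          simp only [hz, add_zero, mem_singleton_iff]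
        · rintro _ rfl
          exact ⟨⟨⟨0, by simp⟩, by simp⟩, ⟨⟨0, by simp⟩, by simp⟩⟩
      intro i j hij
      fin_cases i <;> fin_cases j
      · exact absurd rfl hij
      · exact key
      · exact (inter_comm _ _).trans key
      · exact absurd rfl hij
  · rintro ⟨hq, hpos, hmax⟩
    set c := q.1 / q.2
    have hqc : q = legPt c q.2 := eq_legPt hpos
    have hq' : legPt c q.2 ∈ X := hqc ▸ hq
    refine ⟨hq, ⟨fun _ => legArc c q.2 0, fun _ => ?_, fun _ => ⟨legPt c 0, ?_⟩, ?_⟩, ?_⟩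
    · exact legArc_subset hX hpos.le le_rfl le_rfl hpos.le hq'
    · have := isArc_legArc c hpos.ne'
      rwa [← hqc] at this
    · intro i j hij
      exact absurd (Subsingleton.elim i j) hij
    · rintro ⟨A, hAX, hA, hdis⟩
      have hm : ∀ s, legPt c s ∈ X → s ≤ q.2 := fun s hs => hmax ▸ (hX.isGreatest c).2 hs
      have harc : ∀ i, ∃ s₀ < q.2, ∀ s ∈ Icc s₀ q.2, legPt c s ∈ A i := by
        intro i
        obtain ⟨b, hb⟩ := hA i
        rw [hqc] at hb
        exact hX.arc_contains hpos hm (hAX i) hb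
      obtain ⟨s, hs, hsA⟩ := harc 0
      obtain ⟨s', hs', hsA'⟩ := harc 1
      have hmem : legPt c (max s s') ∈ A 0 ∩ A 1 :=
        ⟨hsA _ ⟨le_max_left _ _, (max_lt hs hs').le⟩, hsA' _ ⟨le_max_right _ _, (max_lt hs hs').le⟩⟩
      rw [hdis 0 1 (by decide)] at hmem
      exact (max_lt hs hs').ne (congrArg Prod.snd (mem_singleton_iff.1 hmem))

end fan

/-! ### The closed embedding -/

/-- For every smooth fan `X`, the endpoint set `E(X)` is homeomorphic to
a closed subspace of complete Erdős space `𝔈_c`. -/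
theorem endpoints_homeo_closed_subset_erdos (X : Set (ℝ × ℝ)) (hX : IsSmoothFan X) :
    ∃ F : Set ↥ErdosSpace, IsClosed F ∧ Nonempty (↥(Endpoints X) ≃ₜ ↥F) := by
  let e := cantorSetHomeomorphNatToBool
  let φ : (ℕ → Bool) → ℝ := fun b => legHeight X (e.symm b)
  have hφm : ∀ b, legPt (e.symm b) (φ b) ∈ X := fun b => (hX.isGreatest _).1
  have hφ : UpperSemicontinuous φ :=
    hX.upperSemicontinuous_legHeight.comp
      (continuous_subtype_val.comp e.symm.continuous)
  obtain ⟨x, g, hg, hg0, hxc, hxm, hxi, hxs⟩ := exists_coords (φ := φ)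
    (fun b => (hX.height_mem (hφm b)).1) (fun b => (hX.height_mem (hφm b)).2) hφ
  have hE : ∀ q : Endpoints X, (q : ℝ × ℝ) ∈ X ∧ 0 < (q : ℝ × ℝ).2 ∧
      legHeight X ((q : ℝ × ℝ).1 / (q : ℝ × ℝ).2) = (q : ℝ × ℝ).2 :=
    fun q => hX.mem_endpoints_iff.1 q.2
  -- the slope of the leg ending in `q`, as a binary sequence
  let β : Endpoints X → (ℕ → Bool) := fun q => e ⟨_, hX.slope_mem (hE q).1 (hE q).2.1⟩
  have hβs : ∀ q, (e.symm (β q) : ℝ) = (q : ℝ × ℝ).1 / (q : ℝ × ℝ).2 := fun q => by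
    simp only [β, Homeomorph.symm_apply_apply]
  have hβφ : ∀ q, φ (β q) = (q : ℝ × ℝ).2 := fun q => by
    simp only [φ, hβs, (hE q).2.2]
  have hβc : Continuous β := by
    refine e.continuous.comp (Continuous.subtype_mk ?_ _)
    exact (continuous_fst.comp continuous_subtype_val).div
      (continuous_snd.comp continuous_subtype_val) fun q => (hE q).2.1.ne'
  have hsum : ∀ q, HasSum (fun n => x n (β q) ^ 2) (g (β q) + 1 / (q : ℝ × ℝ).2) := fun q => by
    have := hxs (β q) (by rw [hβφ]; exact (hE q).2.1)
    rwa [hβφ] at this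
  let v : Endpoints X → lp (fun _ : ℕ => ℝ) 2 := fun q =>
    ⟨fun n => x n (β q), memℓp_of_summable_sq (hsum q).summable⟩
  have hv : ∀ q n, v q n = x n (β q) := fun _ _ => rfl
  have hvn : ∀ q, ‖v q‖ ^ 2 = g (β q) + 1 / (q : ℝ × ℝ).2 := fun q =>
    norm_sq_eq_of_hasSum (hsum q)
  have hvc : Continuous v := by
    refine continuous_iff_continuousAt.2 fun q => tendsto_lp_of_coord (fun n => ?_) ?_
    · exact ((hxc n).comp hβc).tendsto q
    · simp only [hvn]
      refine Continuous.tendsto ?_ q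
      exact (hg.comp hβc).add (continuous_const.div
        (continuous_snd.comp continuous_subtype_val) fun q => (hE q).2.1.ne')
  let Ψ : Endpoints X → ErdosSpace := fun q => ⟨v q, fun n => hxm n (β q)⟩
  have hΨ : Continuous Ψ := hvc.subtype_mk _
  have hinj : Function.Injective Ψ := by
    intro p q hpq
    have h1 : v p = v q := congrArg Subtype.val hpq
    have h2 : β p = β q := hxi _ _ fun n => by rw [← hv, ← hv, h1]
    have h3 : (p : ℝ × ℝ).2 = (q : ℝ × ℝ).2 := by rw [← hβφ, ← hβφ, h2]
    refine Subtype.ext ?_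
    rw [eq_legPt (hE p).2.1, eq_legPt (hE q).2.1, ← hβs, ← hβs, h2, h3]
  have hproper : IsProperMap Ψ := by
    refine isProperMap_iff_ultrafilter.2 ⟨hΨ, fun U y hy => ?_⟩
    have hyv : Tendsto v U (𝓝 (y : lp (fun _ : ℕ => ℝ) 2)) :=
      (continuous_subtype_val.tendsto y).comp hy
    obtain ⟨q₀, hq₀, hle⟩ := hX.isCompact.ultrafilter_le_nhds
      (U.map (Subtype.val : Endpoints X → ℝ × ℝ))
      (Filter.tendsto_principal.2 (Eventually.of_forall fun q : Endpoints X => (hE q).1))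
    have hq : Tendsto (Subtype.val : Endpoints X → ℝ × ℝ) U (𝓝 q₀) := hle
    have hq2 : Tendsto (fun q : Endpoints X => (q : ℝ × ℝ).2) U (𝓝 q₀.2) :=
      (continuous_snd.tendsto q₀).comp hq
    have hnorm : Tendsto (fun q => ‖v q‖ ^ 2) U (𝓝 (‖(y : lp (fun _ : ℕ => ℝ) 2)‖ ^ 2)) :=
      hyv.norm.pow 2
    -- the norms are bounded along `U`, so the heights stay away from `0`
    have hpos : 0 < q₀.2 := by
      set M := ‖(y : lp (fun _ : ℕ => ℝ) 2)‖ ^ 2 + 1 with hM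
      have hM0 : 0 < M := by positivity
      have hev : ∀ᶠ q : Endpoints X in (U : Filter (Endpoints X)), 1 / M ≤ (q : ℝ × ℝ).2 := by
        filter_upwards [hnorm.eventually_lt_const (lt_add_one _)] with q hqM
        rw [hvn] at hqM
        have h1 : 1 / (q : ℝ × ℝ).2 ≤ M := by linarith [hg0 (β q)]
        rw [div_le_iff₀ hM0]
        rwa [div_le_iff₀ (hE q).2.1, mul_comm] at h1
      exact (by positivity : (0 : ℝ) < 1 / M).trans_le (ge_of_tendsto hq2 hev)
    set b₀ : ℕ → Bool := e ⟨_, hX.slope_mem hq₀ hpos⟩ with hb₀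
    have hb₀s : (e.symm b₀ : ℝ) = q₀.1 / q₀.2 := by
      simp only [hb₀, Homeomorph.symm_apply_apply]
    have hb : Tendsto β U (𝓝 b₀) := by
      refine (e.continuous.tendsto _).comp (tendsto_subtype_rng.2 ?_)
      exact ((continuous_fst.tendsto q₀).comp hq).div hq2 hpos.ne'
    have hyn : ∀ n, (y : lp (fun _ : ℕ => ℝ) 2) n = x n b₀ := fun n =>
      tendsto_nhds_unique (((continuous_lp_apply n).tendsto _).comp hyv)
        (((hxc n).tendsto b₀).comp hb)
    have hle₀ : q₀.2 ≤ φ b₀ := by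
      refine (hX.isGreatest _).2 ?_
      show legPt _ _ ∈ X
      rw [hb₀s, ← eq_legPt hpos]
      exact hq₀
    have hynorm : ‖(y : lp (fun _ : ℕ => ℝ) 2)‖ ^ 2 = g b₀ + 1 / φ b₀ := by
      refine norm_sq_eq_of_hasSum ?_
      simpa only [hyn] using hxs b₀ (hpos.trans_le hle₀)
    have hlim : ‖(y : lp (fun _ : ℕ => ℝ) 2)‖ ^ 2 = g b₀ + 1 / q₀.2 := by
      refine tendsto_nhds_unique hnorm ?_
      simp only [hvn]
      exact ((hg.tendsto b₀).comp hb).add (tendsto_const_nhds.div hq2 (ne_of_gt hpos))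
    -- comparing the two values of the norm, the limit point is the top of its leg
    have htop : legHeight X (q₀.1 / q₀.2) = q₀.2 := by
      have h1 : 1 / φ b₀ = 1 / q₀.2 := by linarith
      rw [one_div, one_div, inv_inj] at h1
      rw [← hb₀s]
      exact h1
    refine ⟨⟨q₀, hX.mem_endpoints_iff.2 ⟨hq₀, hpos, htop⟩⟩, ?_, ?_⟩
    · refine Subtype.ext (lp.ext (funext fun n => ?_))
      exact (hyn n).symm
    · rw [nhds_subtype_eq_comap]
      exact tendsto_iff_comap.1 hq
  have hemb : IsClosedEmbedding Ψ :=
    .of_continuous_injective_isClosedMap hΨ hinj hproper.isClosedMap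
  exact ⟨range Ψ, hemb.isClosed_range, ⟨hemb.isEmbedding.toHomeomorph⟩⟩

end SmoothFanPaper
end
end

section
/- Let φ : C → [0,∞) be an upper semi-continuous function on the Cantor set C. Suppose there exist a non-empty open subset U ⊆ C and a real number a₀ ∈ (0,∞) such that (U × {a₀}) ∩ L₀^φ is non-empty and disjoint from G₀^φ. Then G₀^φ has a point of zero-dimensionality. -/
/-!
Let `K = {x ∈ C : φ x ≥ a₀}`, which is closed, hence compact, by upper semi-continuity, and meets
`V` by hypothesis. By Baire's theorem the restriction `φ|K` is continuous at the points of a dense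
subset of `K` (`dense_continuousAt_of_usc`), so it is continuous at some `x ∈ V ∩ K`. Then
`(x, φ x)` is the desired point. Indeed, for a small clopen neighbourhood `W ⊆ V` of `x` in `C`,
the part of the graph over `W` at height `≥ a₀` lies over `W ∩ K`, hence is close to `(x, φ x)` by
continuity of `φ|K`. It is clopen in `G₀^φ` because `φ` omits the value `a₀` on `W`, so that
`φ ≥ a₀` and `φ > a₀` define the same subset.
-/

open Set Topology

noncomputable section

namespace SmoothFanPaper

/-- An upper semi-continuous real function on a Baire space is continuous at the points of a dense
set: each `frontier {f ≥ q}` with `q` rational is closed and nowhere dense, and off their union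
`f` is also lower semi-continuous. -/
theorem dense_continuousAt_of_usc {X : Type*} [TopologicalSpace X] [BaireSpace X] {f : X → ℝ}
    (hf : UpperSemicontinuous f) : Dense {x | ContinuousAt f x} := by
  have hcl : ∀ q : ℚ, IsClosed (f ⁻¹' Ici (q : ℝ)) := fun q => hf.isClosed_preimage q
  have hd : Dense (⋂ q : ℚ, (frontier (f ⁻¹' Ici (q : ℝ)))ᶜ) :=
    dense_iInter_of_isOpen (fun q => isClosed_frontier.isOpen_compl)
      (fun q => interior_eq_empty_iff_dense_compl.1 (interior_frontier (hcl q)))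
  refine hd.mono fun x hx => ?_
  simp only [mem_iInter] at hx
  refine continuousAt_iff_lower_upperSemicontinuousAt.2 ⟨fun y hy => ?_, hf x⟩
  obtain ⟨q, hyq, hqx⟩ := exists_rat_btwn hy
  have hint : x ∈ interior (f ⁻¹' Ici (q : ℝ)) := by
    by_contra h
    exact hx q ((hcl q).frontier_eq ▸ ⟨hqx.le, h⟩)
  filter_upwards [mem_interior_iff_mem_nhds.1 hint] with z hz
  exact hyq.trans_le hz

instance inst_s16 : TotallyDisconnectedSpace cantorSet :=
  cantorSetHomeomorphNatToBool.symm.totallyDisconnectedSpace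

instance : CompactSpace cantorSet := isCompact_iff_compactSpace.1 isCompact_cantorSet

/-- Let `φ : C → [0,∞)` be upper semi-continuous on the Cantor set.
If there are a nonempty (relatively) open subset `U = V ∩ C` of `C` and `a₀ ∈ (0,∞)` such
that `(U × {a₀}) ∩ L₀^φ` is nonempty and disjoint from `G₀^φ`, then `G₀^φ` has a point of
zero-dimensionality. -/
theorem G0_has_zeroDim_point (φ : ℝ → ℝ)
    (h0 : ∀ x ∈ cantorSet, 0 ≤ φ x)
    (husc : UpperSemicontinuousOn φ cantorSet)
    (V : Set ℝ) (hV : IsOpen V) (a₀ : ℝ) (ha₀ : 0 < a₀)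
    (hne : ((((V ∩ cantorSet) ×ˢ ({a₀} : Set ℝ))) ∩ L0 φ).Nonempty)
    (hdisj : (((V ∩ cantorSet) ×ˢ ({a₀} : Set ℝ)) ∩ G0 φ) = ∅) :
    ∃ z : ↥(G0 φ), ZeroDimPointAt z := by
  have hgap : ∀ x ∈ cantorSet, x ∈ V → φ x ≠ a₀ := by
    intro x hxC hxV hx
    have : (x, a₀) ∈ ((V ∩ cantorSet) ×ˢ ({a₀} : Set ℝ)) ∩ G0 φ :=
      ⟨⟨⟨hxV, hxC⟩, rfl⟩, hxC, ha₀, hx.symm⟩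
    rw [hdisj] at this
    exact this
  let f : cantorSet → ℝ := fun x => φ x
  have hf : UpperSemicontinuous f := upperSemicontinuousOn_iff_restrict.2 husc
  let K : Set cantorSet := f ⁻¹' Ici a₀
  have hK : IsClosed K := hf.isClosed_preimage a₀
  have : CompactSpace K := isCompact_iff_compactSpace.1 hK.isCompact
  have hd : Dense {k : K | ContinuousAt (fun k : K => f k) k} :=
    dense_continuousAt_of_usc (hf.comp continuous_subtype_val)
  have hVK : IsOpen {k : K | ((k : cantorSet) : ℝ) ∈ V} :=
    hV.preimage (continuous_subtype_val.comp continuous_subtype_val)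
  obtain ⟨⟨x₀, y₀⟩, ⟨⟨hx₀V, hx₀C⟩, hy₀⟩, -, -, hy₀φ⟩ := hne
  have hx₀K : a₀ ≤ φ x₀ := (mem_singleton_iff.1 hy₀) ▸ hy₀φ
  obtain ⟨⟨x, hxK⟩, hxV, hx⟩ := hd.inter_open_nonempty _ hVK ⟨⟨⟨x₀, hx₀C⟩, hx₀K⟩, hx₀V⟩
  refine ⟨⟨((x : ℝ), f x), x.2, ha₀.trans_le hxK, rfl⟩, fun U hU => ?_⟩
  obtain ⟨U', hU', hUU'⟩ := mem_nhds_subtype _ _ _ |>.1 hU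
  obtain ⟨s, hs, t, ht, hst⟩ := mem_nhds_prod_iff.1 hU'
  -- Continuity of `φ|K`: a neighbourhood `O` of `x` in `C` such that `φ` maps `O ∩ K` into `t`.
  obtain ⟨O, hO, hOt⟩ := mem_nhds_subtype _ _ _ |>.1 (hx ht)
  have hnhds : O ∩ (Subtype.val ⁻¹' s ∩ Subtype.val ⁻¹' V) ∈ 𝓝 x :=
    Filter.inter_mem hO (Filter.inter_mem (continuous_subtype_val.continuousAt hs)
      (continuous_subtype_val.continuousAt (hV.mem_nhds hxV)))
  obtain ⟨W₀, hW₀sub, hW₀, hxW₀⟩ := mem_nhds_iff.1 hnhds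
  obtain ⟨W, hW, hxW, hWW₀⟩ := compact_exists_isClopen_in_isOpen hW₀ hxW₀
  have hWsub := hWW₀.trans hW₀sub
  let π : G0 φ → cantorSet := fun p => ⟨p.1.1, p.2.1⟩
  have hπ : Continuous π := by fun_prop
  have hsnd : Continuous fun p : G0 φ => p.1.2 := by fun_prop
  -- Over `W ⊆ V` the graph skips height `a₀`, so `≥ a₀` and `> a₀` cut out the same set.
  have hN : π ⁻¹' W ∩ (fun p : G0 φ => p.1.2) ⁻¹' Ici a₀ =
      π ⁻¹' W ∩ (fun p : G0 φ => p.1.2) ⁻¹' Ioi a₀ := by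
    ext p
    refine and_congr_right fun hp => ?_
    have hne : a₀ ≠ p.1.2 := fun he =>
      hgap _ p.2.1 (hWsub hp).2.2 (p.2.2.2.symm.trans he.symm)
    exact ⟨fun h : a₀ ≤ p.1.2 => show a₀ < p.1.2 from lt_of_le_of_ne h hne,
      fun h : a₀ < p.1.2 => show a₀ ≤ p.1.2 from h.le⟩
  refine ⟨π ⁻¹' W ∩ (fun p : G0 φ => p.1.2) ⁻¹' Ici a₀,
    ⟨(hW.1.preimage hπ).inter (isClosed_Ici.preimage hsnd), ?_⟩, ⟨hxW, hxK⟩, ?_⟩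
  · rw [hN]
    exact (hW.2.preimage hπ).inter (isOpen_Ioi.preimage hsnd)
  · rintro p ⟨hpW, hpa⟩
    obtain ⟨hpO, hps, -⟩ := hWsub hpW
    have hpK : π p ∈ K := show a₀ ≤ φ p.1.1 from p.2.2.2 ▸ hpa
    have hpt : f (π p) ∈ t := @hOt ⟨π p, hpK⟩ hpO
    refine hUU' (hst ⟨hps, ?_⟩)
    rw [p.2.2.2]
    exact hpt

end SmoothFanPaper
end
end
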